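/- For every 0 < ε ≤ 1 there exists a constant K_ε > 1 such that for every 0 < δ ≤ 1 there exists a constant K̃_{ε,δ} > 1 such that for all r > 0, all multi-indices β ∈ ℕ^n, all N ∈ ℕ and all f ∈ E_N, ‖⟨x⟩^r ∂_x^β f‖_{L²(ℝ^n)} ≤ K̃_{ε,δ} K_ε^{|β|+r} δ^{|β|} (n+1)^{r/2} Γ( (r+|β|)/(2−ε) + 3 ) e^{N^{1−ε/2}/δ^{2−ε}} ‖f‖_{L²(ℝ^n)}. -/

import Mathlib

open MeasureTheory
open scoped BigOperators ENNReal NNReal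

noncomputable section

abbrev En (n : ℕ) := EuclideanSpace ℝ (Fin n)

/-- One-dimensional Hermite function. -/
def hermite1 (k : ℕ) (x : ℝ) : ℝ :=
  (-1 : ℝ) ^ k * ((2 ^ k * (k.factorial : ℝ) * Real.sqrt Real.pi) ^ (-(1/2 : ℝ))) *
    Real.exp (x ^ 2 / 2) * iteratedDeriv k (fun y => Real.exp (-y ^ 2)) x

/-- Tensorized Hermite function on ℝⁿ. -/
def hermiteFun (n : ℕ) (α : Fin n → ℕ) (x : En n) : ℂ :=
  ∏ j, (hermite1 (α j) (x j) : ℂ)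

/-- The span E_N of Hermite functions with |α| ≤ N. -/
def hermiteSpan (n N : ℕ) : Submodule ℂ (En n → ℂ) :=
  Submodule.span ℂ {g | ∃ α : Fin n → ℕ, (∑ j, α j) ≤ N ∧ g = hermiteFun n α}

/-- Partial derivative in direction j. -/
def pderiv1 {n : ℕ} (j : Fin n) (f : En n → ℂ) : En n → ℂ :=
  fun x => fderiv ℝ f x (EuclideanSpace.single j (1 : ℝ))

/-- Multi-index partial derivative ∂^β. -/
def pderivMulti {n : ℕ} (β : Fin n → ℕ) (f : En n → ℂ) : En n → ℂ :=
  (List.finRange n).foldr (fun j g => (pderiv1 j)^[β j] g) f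

/-- Monomial x^α. -/
def monomial (n : ℕ) (α : Fin n → ℕ) (x : En n) : ℝ := ∏ j, (x j) ^ (α j)

/-- L² norm on ℝⁿ. -/
def L2norm (n : ℕ) (f : En n → ℂ) : ℝ := Real.sqrt (∫ x, ‖f x‖ ^ 2)

/-- Japanese bracket ⟨x⟩. -/
def jap (n : ℕ) (x : En n) : ℝ := Real.sqrt (1 + ‖x‖ ^ 2)

/-!
The operators `x_j ± ∂_j` shift the `j`-th index of a Hermite function, multiplying it by
`√(2 α_j)` or `√(2 (α_j + 1))`. Images of distinct Hermite functions stay orthogonal, so the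
parallelogram law gives `‖x_j f‖² + ‖∂_j f‖² ≤ (2N + 1) ‖f‖²` on `E_N`, and both `x_j` and `∂_j` map
`E_N` into `E_{N+1}`. Expanding `⟨x⟩² = 1 + ∑ x_j²` and iterating, `‖⟨x⟩^k ∂^β f‖` with `k = ⌈r⌉` is
at most `(n + 1)^{k/2} (2 (N + m))^{m/2} ‖f‖`, where `m = |β| + k`. Finally put `ρ = 2 - ε` and
`t = (N + m)^{ρ/2} / δ^ρ` in `t^p ≤ Γ(p + 1) e^t` with `p = m / ρ`: the left side is
`(N + m)^{m/2} / δ^m`, and since `ρ/2 < 1` the exponent `t` exceeds `N^{ρ/2} / δ^ρ` by at most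
`m + C`, which is absorbed by the constants.
-/

/-! ### One-dimensional Hermite functions -/

lemma derivative_hermite_succ (k : ℕ) :
    Polynomial.derivative (Polynomial.hermite (k + 1)) = (k + 1) * Polynomial.hermite k := by
  induction k with
  | zero => simp
  | succ k ih =>
    rw [Polynomial.hermite_succ (k + 1), Polynomial.derivative_sub, Polynomial.derivative_mul,
      Polynomial.derivative_X, ih, Polynomial.hermite_succ k]
    simp only [Polynomial.derivative_mul, Polynomial.derivative_add, Polynomial.derivative_natCast,
      Polynomial.derivative_one]
    push_cast
    ring

lemma sqrt_two_pow_mul_rpow_neg_half (k : ℕ) {a : ℝ} (ha : 0 ≤ a) :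
    √2 ^ k * (2 ^ k * a) ^ (-(1 / 2 : ℝ)) = (√a)⁻¹ := by
  have sqrt_pow : √((2 : ℝ) ^ k) = √2 ^ k := by
    rw [Real.sqrt_eq_rpow, Real.sqrt_eq_rpow, Real.rpow_pow_comm zero_le_two]
  rw [Real.rpow_neg (by positivity), ← Real.sqrt_eq_rpow, Real.sqrt_mul (by positivity), sqrt_pow,
    mul_inv, mul_inv_cancel_left₀ (by positivity)]

/-- Physicists' and probabilists' normalisations differ by the dilation `x ↦ √2 x`. -/
lemma hermite1_eq (k : ℕ) (x : ℝ) :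
    hermite1 k x = (√(k.factorial * √Real.pi))⁻¹ *
      (Polynomial.aeval (√2 * x) (Polynomial.hermite k) * Real.exp (-(x ^ 2 / 2))) := by
  have dilation : (fun y : ℝ => Real.exp (-y ^ 2)) =
      fun y => (fun z => Real.exp (-(z ^ 2 / 2))) (√2 * y) := by
    ext y
    simp [mul_pow]
  have smooth : ContDiff ℝ k (fun z : ℝ => Real.exp (-(z ^ 2 / 2))) := by fun_prop
  have sign : (-1 : ℝ) ^ k * (-1) ^ k = 1 := by rw [← mul_pow]; simp
  have gaussian : Real.exp (x ^ 2 / 2) * Real.exp (-((√2 * x) ^ 2 / 2)) =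
      Real.exp (-(x ^ 2 / 2)) := by
    rw [← Real.exp_add, mul_pow, Real.sq_sqrt (by norm_num)]
    ring_nf
  rw [hermite1, dilation, iteratedDeriv_comp_const_mul smooth]
  beta_reduce
  rw [iteratedDeriv_eq_iterate, Polynomial.deriv_gaussian_eq_hermite_mul_gaussian,
    mul_assoc (2 ^ k), ← sqrt_two_pow_mul_rpow_neg_half k (by positivity), ← gaussian]
  linear_combination (√2 ^ k * (2 ^ k * (k.factorial * √Real.pi)) ^ (-(1 / 2 : ℝ)) *
    Real.exp (x ^ 2 / 2) * Polynomial.aeval (√2 * x) (Polynomial.hermite k) *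
    Real.exp (-((√2 * x) ^ 2 / 2))) * sign

lemma sqrt_factorial_succ_mul (k : ℕ) (a : ℝ) :
    √((k + 1).factorial * a) = √(k + 1) * √(k.factorial * a) := by
  rw [← Real.sqrt_mul (by positivity), Nat.factorial_succ]
  push_cast
  rw [mul_assoc]

lemma hasDerivAt_hermite1 (k : ℕ) (x : ℝ) :
    HasDerivAt (hermite1 k) ((√(k.factorial * √Real.pi))⁻¹ *
      (√2 * Polynomial.aeval (√2 * x) (Polynomial.derivative (Polynomial.hermite k)) -
        x * Polynomial.aeval (√2 * x) (Polynomial.hermite k)) * Real.exp (-(x ^ 2 / 2))) x := by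
  have polynomial : HasDerivAt (fun y => Polynomial.aeval (√2 * y) (Polynomial.hermite k)) _ x :=
    (Polynomial.hasDerivAt_aeval _ _).comp x ((hasDerivAt_id x).const_mul √2)
  have gaussian : HasDerivAt (fun y => Real.exp (-(y ^ 2 / 2))) (Real.exp (-(x ^ 2 / 2)) * -x) x :=
    (((hasDerivAt_pow 2 x).div_const 2).neg.exp).congr_deriv (by simp)
  rw [funext (hermite1_eq k)]
  refine ((polynomial.mul gaussian).const_mul _).congr_deriv ?_
  ring

lemma differentiable_hermite1 (k : ℕ) : Differentiable ℝ (hermite1 k) :=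
  fun x => (hasDerivAt_hermite1 k x).differentiableAt

/-- At `k = 0` the truncated `k - 1` is harmless: its coefficient vanishes. -/
lemma mul_hermite1_add_deriv (k : ℕ) (x : ℝ) :
    x * hermite1 k x + deriv (hermite1 k) x = √(2 * k) * hermite1 (k - 1) x := by
  rw [(hasDerivAt_hermite1 k x).deriv, hermite1_eq]
  cases k with
  | zero =>
    simp
    ring
  | succ k =>
    rw [hermite1_eq, derivative_hermite_succ, sqrt_factorial_succ_mul, Nat.add_sub_cancel,
      Real.sqrt_mul zero_le_two]
    have sqrt_sq : √((k : ℝ) + 1) ^ 2 = k + 1 := Real.sq_sqrt (by positivity)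
    simp only [map_mul, map_add, map_natCast, map_one, Nat.cast_succ]
    field_simp
    rw [sqrt_sq]
    ring

lemma mul_hermite1_sub_deriv (k : ℕ) (x : ℝ) :
    x * hermite1 k x - deriv (hermite1 k) x = √(2 * (k + 1)) * hermite1 (k + 1) x := by
  have sqrt_two_mul_self : √(2 : ℝ) * √2 = 2 := Real.mul_self_sqrt zero_le_two
  rw [(hasDerivAt_hermite1 k x).deriv, hermite1_eq, hermite1_eq, sqrt_factorial_succ_mul,
    Polynomial.hermite_succ, Real.sqrt_mul zero_le_two]
  simp only [map_sub, map_mul, Polynomial.aeval_X]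
  field_simp
  linear_combination (-x * Polynomial.aeval (x * √2) (Polynomial.hermite k)) * sqrt_two_mul_self

lemma integrable_eval_mul_exp_neg_mul_sq (p : Polynomial ℝ) {b : ℝ} (hb : 0 < b) :
    Integrable (fun x : ℝ => p.eval x * Real.exp (-b * x ^ 2)) := by
  simp_rw [Polynomial.eval_eq_sum_range, Finset.sum_mul, mul_assoc]
  refine integrable_finsetSum _ fun i _ => Integrable.const_mul ?_ _
  have exponent : (-1 : ℝ) < i := neg_one_lt_zero.trans_le i.cast_nonneg
  simpa only [Real.rpow_natCast] using integrable_rpow_mul_exp_neg_mul_sq hb exponent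

lemma memLp_two_hermite1 (k : ℕ) : MemLp (hermite1 k) 2 := by
  rw [memLp_two_iff_integrable_sq (differentiable_hermite1 k).continuous.aestronglyMeasurable]
  set c := (√(k.factorial * √Real.pi))⁻¹
  set p : Polynomial ℝ := ((Polynomial.hermite k).map (Int.castRingHom ℝ)).comp
    (Polynomial.C √2 * Polynomial.X)
  refine ((integrable_eval_mul_exp_neg_mul_sq (p ^ 2) one_pos).const_mul (c ^ 2)).congr
    (.of_forall fun x => ?_)
  have eval_p : p.eval x = Polynomial.aeval (√2 * x) (Polynomial.hermite k) := by
    simp [p, Polynomial.eval_map, Polynomial.aeval_def]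
  have gaussian : Real.exp (-1 * x ^ 2) = Real.exp (-(x ^ 2 / 2)) ^ 2 := by
    rw [← Real.exp_nat_mul]
    push_cast
    ring_nf
  beta_reduce
  rw [hermite1_eq, Polynomial.eval_pow, eval_p, gaussian]
  ring

lemma integrable_hermite1_mul_hermite1 (k l : ℕ) :
    Integrable (fun x => hermite1 k x * hermite1 l x) :=
  (memLp_two_hermite1 k).integrable_mul (memLp_two_hermite1 l)

/-- Lowering and raising are adjoint: the integrands differ by the derivative of `φ_k φ_l`. -/
lemma sqrt_mul_integral_hermite1_pred_mul (k l : ℕ) :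
    √(2 * k) * ∫ x, hermite1 (k - 1) x * hermite1 l x =
      √(2 * (l + 1)) * ∫ x, hermite1 k x * hermite1 (l + 1) x := by
  have lowered := (integrable_hermite1_mul_hermite1 (k - 1) l).const_mul √(2 * k)
  have raised := (integrable_hermite1_mul_hermite1 k (l + 1)).const_mul √(2 * (l + 1))
  rw [← sub_eq_zero, ← integral_const_mul, ← integral_const_mul, ← integral_sub lowered raised]
  refine integral_eq_zero_of_hasDerivAt_of_integrable (fun x => ?_) (lowered.sub raised)
    (integrable_hermite1_mul_hermite1 k l)
  refine ((differentiable_hermite1 k x).hasDerivAt.mul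
    (differentiable_hermite1 l x).hasDerivAt).congr_deriv ?_
  linear_combination hermite1 l x * mul_hermite1_add_deriv k x -
    hermite1 k x * mul_hermite1_sub_deriv l x

lemma integral_hermite1_zero_mul_self : ∫ x, hermite1 0 x * hermite1 0 x = 1 := by
  have density (x : ℝ) : hermite1 0 x * hermite1 0 x = (√Real.pi)⁻¹ * Real.exp (-1 * x ^ 2) := by
    have gaussian : Real.exp (-1 * x ^ 2) = Real.exp (-(x ^ 2 / 2)) * Real.exp (-(x ^ 2 / 2)) := by
      rw [← Real.exp_add]
      ring_nf
    have sqrt_sq : (√√Real.pi)⁻¹ ^ 2 = (√Real.pi)⁻¹ := by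
      rw [inv_pow, Real.sq_sqrt (Real.sqrt_nonneg _)]
    rw [hermite1_eq, gaussian, ← sqrt_sq]
    simp only [Polynomial.hermite_zero, Nat.factorial_zero, Nat.cast_one, one_mul, map_one]
    ring
  simp_rw [density]
  rw [integral_const_mul, integral_gaussian, div_one, inv_mul_cancel₀ (by positivity)]

lemma integral_hermite1_mul_hermite1 (k l : ℕ) :
    ∫ x, hermite1 k x * hermite1 l x = if k = l then 1 else 0 := by
  have zero_succ (m : ℕ) : ∫ x, hermite1 0 x * hermite1 (m + 1) x = 0 := by
    have ladder := sqrt_mul_integral_hermite1_pred_mul 0 m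
    rw [Nat.cast_zero, mul_zero, Real.sqrt_zero, zero_mul, zero_eq_mul] at ladder
    exact ladder.resolve_left (by positivity)
  induction l generalizing k with
  | zero =>
    cases k with
    | zero => simpa using integral_hermite1_zero_mul_self
    | succ k => simpa [mul_comm] using zero_succ k
  | succ l ih =>
    cases k with
    | zero => simpa using zero_succ l
    | succ k =>
      have ladder := sqrt_mul_integral_hermite1_pred_mul (k + 1) l
      have sqrt_ne : √(2 * ((l : ℝ) + 1)) ≠ 0 := by positivity
      rw [Nat.add_sub_cancel, ih] at ladder
      refine mul_left_cancel₀ sqrt_ne (ladder.symm.trans ?_)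
      by_cases hkl : k = l <;> simp [hkl]

/-! ### Orthogonal families in `L²` -/

section OrthogonalFamily

variable {𝕜 X E ι : Type*} [RCLike 𝕜] [MeasurableSpace X] {μ : Measure X}
  [NormedAddCommGroup E] [InnerProductSpace 𝕜 E]

lemma integrable_inner_of_memLp_two {f g : X → E} (hf : MemLp f 2 μ) (hg : MemLp g 2 μ) :
    Integrable (fun x => inner 𝕜 (f x) (g x)) μ := by
  refine (L2.integrable_inner (hf.toLp f) (hg.toLp g)).congr ?_
  filter_upwards [hf.coeFn_toLp, hg.coeFn_toLp] with x hfx hgx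
  rw [hfx, hgx]

lemma integral_norm_sq_sum_smul [DecidableEq ι] {e : ι → X → E} {w : ι → ℝ}
    (he : ∀ i, MemLp (e i) 2 μ)
    (orthogonal : ∀ i j, ∫ x, inner 𝕜 (e i x) (e j x) ∂μ = if i = j then (w i : 𝕜) else 0)
    (s : Finset ι) (c : ι → 𝕜) :
    ∫ x, ‖(∑ i ∈ s, c i • e i) x‖ ^ 2 ∂μ = ∑ i ∈ s, ‖c i‖ ^ 2 * w i := by
  have integrable_term (i j : ι) :
      Integrable (fun x => c j * (starRingEnd 𝕜 (c i) * inner 𝕜 (e i x) (e j x))) μ :=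
    ((integrable_inner_of_memLp_two (he i) (he j)).const_mul _).const_mul _
  have expand (x : X) : ((‖(∑ i ∈ s, c i • e i) x‖ ^ 2 : ℝ) : 𝕜) =
      ∑ j ∈ s, ∑ i ∈ s, c j * (starRingEnd 𝕜 (c i) * inner 𝕜 (e i x) (e j x)) := by
    simp only [RCLike.ofReal_pow, ← inner_self_eq_norm_sq_to_K (𝕜 := 𝕜), Finset.sum_apply,
      Pi.smul_apply, sum_inner, inner_sum, inner_smul_left, inner_smul_right, Finset.mul_sum]
  apply RCLike.ofReal_injective (K := 𝕜)
  rw [← integral_ofReal]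
  simp_rw [expand]
  rw [integral_finsetSum _ fun j _ => integrable_finsetSum _ fun i _ => integrable_term i j,
    RCLike.ofReal_sum]
  refine Finset.sum_congr rfl fun j hj => ?_
  rw [integral_finsetSum _ fun i _ => integrable_term i j]
  simp_rw [integral_const_mul, orthogonal, mul_ite, mul_zero]
  rw [Finset.sum_ite_eq', if_pos hj, ← mul_assoc, RCLike.mul_conj]
  push_cast
  rfl

end OrthogonalFamily

/-! ### Hermite functions on `ℝⁿ` -/

lemma inner_hermiteFun {n : ℕ} (α β : Fin n → ℕ) (x : En n) :
    inner ℂ (hermiteFun n α x) (hermiteFun n β x) =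
      ∏ j, ((hermite1 (α j) (x j) * hermite1 (β j) (x j) : ℝ) : ℂ) := by
  simp only [hermiteFun, RCLike.inner_apply, map_prod, Complex.conj_ofReal,
    ← Finset.prod_mul_distrib, Complex.ofReal_mul, mul_comm]

lemma integral_inner_hermiteFun {n : ℕ} (α β : Fin n → ℕ) :
    ∫ x : En n, inner ℂ (hermiteFun n α x) (hermiteFun n β x) = if α = β then 1 else 0 := by
  simp_rw [inner_hermiteFun]
  rw [(PiLp.volume_preserving_ofLp (Fin n)).integral_comp
      (MeasurableEquiv.toLp 2 (Fin n → ℝ)).symm.measurableEmbedding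
      (fun y => ∏ j, ((hermite1 (α j) (y j) * hermite1 (β j) (y j) : ℝ) : ℂ)),
    integral_fintype_prod_volume_eq_prod
      (fun j t => ((hermite1 (α j) t * hermite1 (β j) t : ℝ) : ℂ))]
  simp_rw [integral_complex_ofReal, integral_hermite1_mul_hermite1, apply_ite Complex.ofReal]
  simp [Finset.prod_ite_zero, funext_iff]

lemma hermiteFun_eq_mul_prod_erase {n : ℕ} {j : Fin n} {α β : Fin n → ℕ}
    (h : ∀ i ≠ j, β i = α i) (x : En n) :
    hermiteFun n β x =
      hermite1 (β j) (x j) * ∏ i ∈ Finset.univ.erase j, (hermite1 (α i) (x i) : ℂ) := by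
  rw [hermiteFun, ← Finset.mul_prod_erase _ _ (Finset.mem_univ j)]
  congr 1
  exact Finset.prod_congr rfl fun i hi => by rw [h i (Finset.ne_of_mem_erase hi)]

lemma hasFDerivAt_hermiteFun {n : ℕ} (α : Fin n → ℕ) (x : En n) :
    HasFDerivAt (hermiteFun n α)
      (∑ j, (∏ i ∈ Finset.univ.erase j, (hermite1 (α i) (x i) : ℂ)) •
        (Complex.ofRealCLM ∘L (deriv (hermite1 (α j)) (x j) •
          (EuclideanSpace.proj j : En n →L[ℝ] ℝ)))) x := by
  have factor (j : Fin n) : HasFDerivAt (fun y : En n => hermite1 (α j) (y j))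
      (deriv (hermite1 (α j)) (x j) • (EuclideanSpace.proj j : En n →L[ℝ] ℝ)) x :=
    HasDerivAt.comp_hasFDerivAt (h₂ := hermite1 (α j)) x
      (differentiable_hermite1 (α j) (x j)).hasDerivAt
      (EuclideanSpace.proj j : En n →L[ℝ] ℝ).hasFDerivAt
  exact HasFDerivAt.finsetProd fun j _ => Complex.ofRealCLM.hasFDerivAt.comp x (factor j)

lemma differentiable_hermiteFun {n : ℕ} (α : Fin n → ℕ) : Differentiable ℝ (hermiteFun n α) :=
  fun x => (hasFDerivAt_hermiteFun α x).differentiableAt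

lemma pderiv1_hermiteFun {n : ℕ} (j : Fin n) (α : Fin n → ℕ) (x : En n) :
    pderiv1 j (hermiteFun n α) x =
      deriv (hermite1 (α j)) (x j) * ∏ i ∈ Finset.univ.erase j, (hermite1 (α i) (x i) : ℂ) := by
  rw [pderiv1, (hasFDerivAt_hermiteFun α x).fderiv, sum_apply,
    Finset.sum_eq_single_of_mem j (Finset.mem_univ j)]
  · simp [mul_comm]
  · intro i _ hij
    simp [hij]

lemma memLp_two_hermiteFun {n : ℕ} (α : Fin n → ℕ) : MemLp (hermiteFun n α) 2 := by
  rw [memLp_two_iff_integrable_sq_norm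
    (differentiable_hermiteFun α).continuous.aestronglyMeasurable]
  have norm_sq : (fun x : En n => ‖hermiteFun n α x‖ ^ 2) =
      (fun y : Fin n → ℝ => ∏ j, hermite1 (α j) (y j) ^ 2) ∘ WithLp.ofLp := by
    ext x
    simp [hermiteFun, ← Finset.prod_pow]
  rw [norm_sq]
  exact (PiLp.volume_preserving_ofLp (Fin n)).integrable_comp_of_integrable
    (.fintype_prod fun j => (memLp_two_hermite1 (α j)).integrable_sq)

/-! ### Ladder operators -/

/-- The annihilation operator `x_j + ∂_j`; it lowers the `j`-th index of a Hermite function. -/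
def annihilation {n : ℕ} (j : Fin n) (f : En n → ℂ) : En n → ℂ :=
  fun x => x j * f x + pderiv1 j f x

/-- The creation operator `x_j - ∂_j`; it raises the `j`-th index of a Hermite function. -/
def creation {n : ℕ} (j : Fin n) (f : En n → ℂ) : En n → ℂ :=
  fun x => x j * f x - pderiv1 j f x

lemma annihilation_hermiteFun {n : ℕ} (j : Fin n) (α : Fin n → ℕ) :
    annihilation j (hermiteFun n α) =
      (√(2 * α j) : ℂ) • hermiteFun n (α - Pi.single j 1) := by
  ext x
  have lowered : ∀ i ≠ j, (α - Pi.single j 1 : Fin n → ℕ) i = α i := fun i hij => by simp [hij]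
  have ladder := congrArg Complex.ofReal (mul_hermite1_add_deriv (α j) (x j))
  push_cast at ladder
  rw [annihilation, pderiv1_hermiteFun, hermiteFun_eq_mul_prod_erase (j := j) fun _ _ => rfl,
    Pi.smul_apply, hermiteFun_eq_mul_prod_erase lowered, Pi.sub_apply, Pi.single_eq_same,
    smul_eq_mul]
  linear_combination (∏ i ∈ Finset.univ.erase j, (hermite1 (α i) (x i) : ℂ)) * ladder

lemma creation_hermiteFun {n : ℕ} (j : Fin n) (α : Fin n → ℕ) :
    creation j (hermiteFun n α) =
      (√(2 * (α j + 1)) : ℂ) • hermiteFun n (α + Pi.single j 1) := by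
  ext x
  have raised : ∀ i ≠ j, (α + Pi.single j 1 : Fin n → ℕ) i = α i := fun i hij => by simp [hij]
  have ladder := congrArg Complex.ofReal (mul_hermite1_sub_deriv (α j) (x j))
  push_cast at ladder
  rw [creation, pderiv1_hermiteFun, hermiteFun_eq_mul_prod_erase (j := j) fun _ _ => rfl,
    Pi.smul_apply, hermiteFun_eq_mul_prod_erase raised, Pi.add_apply, Pi.single_eq_same,
    smul_eq_mul]
  linear_combination (∏ i ∈ Finset.univ.erase j, (hermite1 (α i) (x i) : ℂ)) * ladder

lemma pderiv1_sum_smul {n : ℕ} {ι : Type*} (j : Fin n) (s : Finset ι) (c : ι → ℂ)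
    {e : ι → En n → ℂ} (he : ∀ i, Differentiable ℝ (e i)) :
    pderiv1 j (∑ i ∈ s, c i • e i) = ∑ i ∈ s, c i • pderiv1 j (e i) := by
  ext x
  rw [pderiv1, fderiv_sum fun i _ => ((he i).const_smul (c i)).differentiableAt, sum_apply,
    Finset.sum_apply]
  refine Finset.sum_congr rfl fun i _ => ?_
  rw [fderiv_const_smul (he i x)]
  rfl

lemma annihilation_sum_smul {n : ℕ} {ι : Type*} (j : Fin n) (s : Finset ι) (c : ι → ℂ)
    {e : ι → En n → ℂ} (he : ∀ i, Differentiable ℝ (e i)) :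
    annihilation j (∑ i ∈ s, c i • e i) = ∑ i ∈ s, c i • annihilation j (e i) := by
  ext x
  simp only [annihilation, pderiv1_sum_smul j s c he, Finset.sum_apply, Pi.smul_apply, smul_eq_mul,
    Finset.mul_sum, ← Finset.sum_add_distrib]
  exact Finset.sum_congr rfl fun i _ => by ring

lemma creation_sum_smul {n : ℕ} {ι : Type*} (j : Fin n) (s : Finset ι) (c : ι → ℂ)
    {e : ι → En n → ℂ} (he : ∀ i, Differentiable ℝ (e i)) :
    creation j (∑ i ∈ s, c i • e i) = ∑ i ∈ s, c i • creation j (e i) := by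
  ext x
  simp only [creation, pderiv1_sum_smul j s c he, Finset.sum_apply, Pi.smul_apply, smul_eq_mul,
    Finset.mul_sum, ← Finset.sum_sub_distrib]
  exact Finset.sum_congr rfl fun i _ => by ring

lemma annihilation_add_creation {n : ℕ} (j : Fin n) (f : En n → ℂ) (x : En n) :
    annihilation j f x + creation j f x = 2 * (x j * f x) := by
  rw [annihilation, creation]
  ring

lemma annihilation_sub_creation {n : ℕ} (j : Fin n) (f : En n → ℂ) (x : En n) :
    annihilation j f x - creation j f x = 2 * pderiv1 j f x := by
  rw [annihilation, creation]
  ring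

lemma integral_inner_annihilation_hermiteFun {n : ℕ} (j : Fin n) (α β : Fin n → ℕ) :
    ∫ x, inner ℂ (annihilation j (hermiteFun n α) x) (annihilation j (hermiteFun n β) x) =
      if α = β then ((2 * α j : ℝ) : ℂ) else 0 := by
  simp_rw [annihilation_hermiteFun, Pi.smul_apply, inner_smul_left, inner_smul_right]
  rw [integral_const_mul, integral_const_mul, integral_inner_hermiteFun]
  rcases eq_or_ne α β with rfl | hαβ
  · rw [if_pos rfl, if_pos rfl, mul_one, Complex.conj_ofReal, ← Complex.ofReal_mul,
      Real.mul_self_sqrt (by positivity)]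
  rw [if_neg hαβ]
  rcases Nat.eq_zero_or_pos (α j) with hα | hα
  · simp [hα]
  rcases Nat.eq_zero_or_pos (β j) with hβ | hβ
  · simp [hβ]
  have single_le {γ : Fin n → ℕ} (hγ : 0 < γ j) : Pi.single j 1 ≤ γ :=
    update_le_iff.mpr ⟨hγ, fun _ _ => Nat.zero_le _⟩
  have lowered_ne : α - Pi.single j 1 ≠ β - Pi.single j 1 := fun h =>
    hαβ ((tsub_left_inj (single_le hα) (single_le hβ)).mp h)
  rw [if_neg lowered_ne, mul_zero, mul_zero]

lemma integral_inner_creation_hermiteFun {n : ℕ} (j : Fin n) (α β : Fin n → ℕ) :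
    ∫ x, inner ℂ (creation j (hermiteFun n α) x) (creation j (hermiteFun n β) x) =
      if α = β then ((2 * (α j + 1) : ℝ) : ℂ) else 0 := by
  simp_rw [creation_hermiteFun, Pi.smul_apply, inner_smul_left, inner_smul_right]
  rw [integral_const_mul, integral_const_mul, integral_inner_hermiteFun]
  rcases eq_or_ne α β with rfl | hαβ
  · rw [if_pos rfl, if_pos rfl, mul_one, Complex.conj_ofReal, ← Complex.ofReal_mul,
      Real.mul_self_sqrt (by positivity)]
  · simp [hαβ]

/-! ### The spaces `E_N` -/

lemma hermiteFun_mem_hermiteSpan {n N : ℕ} {α : Fin n → ℕ} (h : ∑ j, α j ≤ N) :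
    hermiteFun n α ∈ hermiteSpan n N :=
  Submodule.subset_span ⟨α, h, rfl⟩

lemma hermiteSpan_mono (n : ℕ) : Monotone (hermiteSpan n) := fun _ _ hNM =>
  Submodule.span_mono fun _ ⟨α, hα, hg⟩ => ⟨α, hα.trans hNM, hg⟩

lemma exists_eq_sum_of_mem_hermiteSpan {n N : ℕ} {f : En n → ℂ} (hf : f ∈ hermiteSpan n N) :
    ∃ (s : Finset (Fin n → ℕ)) (c : (Fin n → ℕ) → ℂ), (∀ α ∈ s, ∑ j, α j ≤ N) ∧
      f = ∑ α ∈ s, c α • hermiteFun n α := by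
  have generators : {g | ∃ α : Fin n → ℕ, (∑ j, α j) ≤ N ∧ g = hermiteFun n α} =
      hermiteFun n '' {α | ∑ j, α j ≤ N} := by
    ext g
    simp only [Set.mem_ofPred_eq, Set.mem_image, eq_comm]
  rw [hermiteSpan, generators, Finsupp.mem_span_image_iff_linearCombination] at hf
  obtain ⟨c, hc, rfl⟩ := hf
  exact ⟨c.support, c, fun α hα => (Finsupp.mem_supported _ _).mp hc hα, rfl⟩

lemma memLp_two_of_mem_hermiteSpan {n N : ℕ} {f : En n → ℂ} (hf : f ∈ hermiteSpan n N) :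
    MemLp f 2 := by
  obtain ⟨s, c, -, rfl⟩ := exists_eq_sum_of_mem_hermiteSpan hf
  exact memLp_finsetSum' s fun α _ => (memLp_two_hermiteFun α).const_smul (c α)

lemma annihilation_mem_hermiteSpan {n N : ℕ} (j : Fin n) {f : En n → ℂ}
    (hf : f ∈ hermiteSpan n N) : annihilation j f ∈ hermiteSpan n N := by
  obtain ⟨s, c, hs, rfl⟩ := exists_eq_sum_of_mem_hermiteSpan hf
  rw [annihilation_sum_smul j s c differentiable_hermiteFun]
  refine Submodule.sum_mem _ fun α hα => Submodule.smul_mem _ _ ?_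
  rw [annihilation_hermiteFun]
  exact Submodule.smul_mem _ _ (hermiteFun_mem_hermiteSpan
    ((Finset.sum_le_sum fun i _ => tsub_le_self).trans (hs α hα)))

lemma creation_mem_hermiteSpan {n N : ℕ} (j : Fin n) {f : En n → ℂ}
    (hf : f ∈ hermiteSpan n N) : creation j f ∈ hermiteSpan n (N + 1) := by
  obtain ⟨s, c, hs, rfl⟩ := exists_eq_sum_of_mem_hermiteSpan hf
  rw [creation_sum_smul j s c differentiable_hermiteFun]
  refine Submodule.sum_mem _ fun α hα => Submodule.smul_mem _ _ ?_
  rw [creation_hermiteFun]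
  refine Submodule.smul_mem _ _ (hermiteFun_mem_hermiteSpan ?_)
  simpa [Finset.sum_add_distrib] using hs α hα

lemma coord_mul_mem_hermiteSpan {n N : ℕ} (j : Fin n) {f : En n → ℂ}
    (hf : f ∈ hermiteSpan n N) : (fun x => (x j : ℂ) * f x) ∈ hermiteSpan n (N + 1) := by
  have half_sum : (fun x => (x j : ℂ) * f x) = (2⁻¹ : ℂ) • (annihilation j f + creation j f) := by
    ext x
    simp [annihilation_add_creation]
  rw [half_sum]
  exact Submodule.smul_mem _ _ (Submodule.add_mem _
    (hermiteSpan_mono n N.le_succ (annihilation_mem_hermiteSpan j hf))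
    (creation_mem_hermiteSpan j hf))

lemma pderiv1_mem_hermiteSpan {n N : ℕ} (j : Fin n) {f : En n → ℂ}
    (hf : f ∈ hermiteSpan n N) : pderiv1 j f ∈ hermiteSpan n (N + 1) := by
  have half_sub : pderiv1 j f = (2⁻¹ : ℂ) • (annihilation j f - creation j f) := by
    ext x
    simp [annihilation_sub_creation]
  rw [half_sub]
  exact Submodule.smul_mem _ _ (Submodule.sub_mem _
    (hermiteSpan_mono n N.le_succ (annihilation_mem_hermiteSpan j hf))
    (creation_mem_hermiteSpan j hf))

lemma integral_norm_sq_coord_mul_add_integral_norm_sq_pderiv1 {n N : ℕ} (j : Fin n) {f : En n → ℂ}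
    (hf : f ∈ hermiteSpan n N) :
    (∫ x, ‖(x j : ℂ) * f x‖ ^ 2) + (∫ x, ‖pderiv1 j f x‖ ^ 2) =
      ((∫ x, ‖annihilation j f x‖ ^ 2) + ∫ x, ‖creation j f x‖ ^ 2) / 2 := by
  have integrable_sq {N : ℕ} {g : En n → ℂ} (hg : g ∈ hermiteSpan n N) :=
    (memLp_two_of_mem_hermiteSpan hg).integrable_norm_pow two_ne_zero
  rw [← integral_add (integrable_sq (coord_mul_mem_hermiteSpan j hf))
      (integrable_sq (pderiv1_mem_hermiteSpan j hf)),
    ← integral_add (integrable_sq (annihilation_mem_hermiteSpan j hf))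
      (integrable_sq (creation_mem_hermiteSpan j hf)), ← integral_div]
  congr 1 with x
  have parallelogram := parallelogram_law_with_norm ℂ ((x j : ℂ) * f x) (pderiv1 j f x)
  rw [annihilation, creation]
  linarith

lemma integral_norm_sq_sum_smul_hermiteFun {n : ℕ} (s : Finset (Fin n → ℕ))
    (c : (Fin n → ℕ) → ℂ) :
    ∫ x, ‖(∑ α ∈ s, c α • hermiteFun n α) x‖ ^ 2 = ∑ α ∈ s, ‖c α‖ ^ 2 := by
  simpa using integral_norm_sq_sum_smul (w := 1) memLp_two_hermiteFun
    (by simpa using integral_inner_hermiteFun) s c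

lemma integral_norm_sq_annihilation_sum_smul_hermiteFun {n : ℕ} (j : Fin n)
    (s : Finset (Fin n → ℕ)) (c : (Fin n → ℕ) → ℂ) :
    ∫ x, ‖annihilation j (∑ α ∈ s, c α • hermiteFun n α) x‖ ^ 2 =
      ∑ α ∈ s, ‖c α‖ ^ 2 * (2 * α j) := by
  rw [annihilation_sum_smul j s c differentiable_hermiteFun]
  exact integral_norm_sq_sum_smul (w := fun α => 2 * (α j : ℝ))
    (fun α => memLp_two_of_mem_hermiteSpan
      (annihilation_mem_hermiteSpan j (hermiteFun_mem_hermiteSpan le_rfl)))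
    (integral_inner_annihilation_hermiteFun j) s c

lemma integral_norm_sq_creation_sum_smul_hermiteFun {n : ℕ} (j : Fin n)
    (s : Finset (Fin n → ℕ)) (c : (Fin n → ℕ) → ℂ) :
    ∫ x, ‖creation j (∑ α ∈ s, c α • hermiteFun n α) x‖ ^ 2 =
      ∑ α ∈ s, ‖c α‖ ^ 2 * (2 * (α j + 1)) := by
  rw [creation_sum_smul j s c differentiable_hermiteFun]
  exact integral_norm_sq_sum_smul (w := fun α => 2 * ((α j : ℝ) + 1))
    (fun α => memLp_two_of_mem_hermiteSpan
      (creation_mem_hermiteSpan j (hermiteFun_mem_hermiteSpan le_rfl)))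
    (integral_inner_creation_hermiteFun j) s c

lemma integral_norm_sq_coord_mul_add_integral_norm_sq_pderiv1_le {n N : ℕ} (j : Fin n)
    {f : En n → ℂ} (hf : f ∈ hermiteSpan n N) :
    (∫ x, ‖(x j : ℂ) * f x‖ ^ 2) + (∫ x, ‖pderiv1 j f x‖ ^ 2) ≤
      (2 * N + 1) * ∫ x, ‖f x‖ ^ 2 := by
  rw [integral_norm_sq_coord_mul_add_integral_norm_sq_pderiv1 j hf]
  obtain ⟨s, c, hs, rfl⟩ := exists_eq_sum_of_mem_hermiteSpan hf
  rw [integral_norm_sq_annihilation_sum_smul_hermiteFun,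
    integral_norm_sq_creation_sum_smul_hermiteFun, integral_norm_sq_sum_smul_hermiteFun,
    ← Finset.sum_add_distrib, Finset.sum_div, Finset.mul_sum]
  refine Finset.sum_le_sum fun α hα => ?_
  have index_le : (α j : ℝ) ≤ N := by
    exact_mod_cast (Finset.single_le_sum (fun _ _ => Nat.zero_le _) (Finset.mem_univ j)).trans
      (hs α hα)
  nlinarith [sq_nonneg ‖c α‖]

lemma integral_norm_sq_coord_mul_le {n N : ℕ} (j : Fin n) {f : En n → ℂ}
    (hf : f ∈ hermiteSpan n N) :
    ∫ x, ‖(x j : ℂ) * f x‖ ^ 2 ≤ (2 * N + 1) * ∫ x, ‖f x‖ ^ 2 :=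
  (le_add_of_nonneg_right (by positivity)).trans
    (integral_norm_sq_coord_mul_add_integral_norm_sq_pderiv1_le j hf)

lemma integral_norm_sq_pderiv1_le {n N : ℕ} (j : Fin n) {f : En n → ℂ}
    (hf : f ∈ hermiteSpan n N) :
    ∫ x, ‖pderiv1 j f x‖ ^ 2 ≤ (2 * N + 1) * ∫ x, ‖f x‖ ^ 2 :=
  (le_add_of_nonneg_left (by positivity)).trans
    (integral_norm_sq_coord_mul_add_integral_norm_sq_pderiv1_le j hf)

/-! ### Iterated derivatives and weights -/

/-- The operator `T` raises the degree by at most `b`, with squared norm at most `(2M)^b`, on those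
`E_N` that it keeps inside `E_M`. The ceiling `M` makes the bound multiplicative under
composition. -/
def HermiteBounded {n : ℕ} (M b : ℕ) (T : (En n → ℂ) → En n → ℂ) : Prop :=
  ∀ ⦃N : ℕ⦄ ⦃f : En n → ℂ⦄, N + b ≤ M → f ∈ hermiteSpan n N →
    T f ∈ hermiteSpan n (N + b) ∧ ∫ x, ‖T f x‖ ^ 2 ≤ (2 * M) ^ b * ∫ x, ‖f x‖ ^ 2

namespace HermiteBounded

variable {n M b c : ℕ} {S T : (En n → ℂ) → En n → ℂ}

protected lemma id : HermiteBounded M 0 (id : (En n → ℂ) → En n → ℂ) :=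
  fun _ _ _ hf => ⟨hf, by simp⟩

protected lemma comp (hS : HermiteBounded M b S) (hT : HermiteBounded M c T) :
    HermiteBounded M (b + c) (S ∘ T) := by
  intro N f hM hf
  obtain ⟨T_mem, T_le⟩ := hT (by lia) hf
  obtain ⟨ST_mem, ST_le⟩ := hS (by lia) T_mem
  refine ⟨by rwa [add_comm b, ← add_assoc], ST_le.trans ?_⟩
  rw [pow_add, mul_assoc]
  gcongr

protected lemma iterate (hT : HermiteBounded M 1 T) (b : ℕ) : HermiteBounded M b T^[b] := by
  induction b with
  | zero => exact .id
  | succ b ih =>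
    rw [Function.iterate_succ]
    exact ih.comp hT

protected lemma foldr {ι : Type*} {T : ι → (En n → ℂ) → En n → ℂ} {b : ι → ℕ}
    (hT : ∀ i, HermiteBounded M (b i) (T i)) (l : List ι) :
    HermiteBounded M (l.map b).sum (fun f => l.foldr T f) := by
  induction l with
  | nil => exact .id
  | cons i l ih => exact (hT i).comp ih

end HermiteBounded

lemma two_mul_add_one_mul_le {N M : ℕ} (hNM : N + 1 ≤ M) {I : ℝ} (hI : 0 ≤ I) :
    (2 * N + 1) * I ≤ (2 * M) ^ 1 * I := by
  have cast_le : (N : ℝ) + 1 ≤ M := by exact_mod_cast hNM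
  rw [pow_one]
  gcongr
  linarith

lemma hermiteBounded_coord_mul {n : ℕ} (M : ℕ) (j : Fin n) :
    HermiteBounded M 1 fun f x => (x j : ℂ) * f x :=
  fun _ _ hM hf => ⟨coord_mul_mem_hermiteSpan j hf, (integral_norm_sq_coord_mul_le j hf).trans
    (two_mul_add_one_mul_le hM (by positivity))⟩

lemma hermiteBounded_pderiv1 {n : ℕ} (M : ℕ) (j : Fin n) :
    HermiteBounded M 1 (pderiv1 j) :=
  fun _ _ hM hf => ⟨pderiv1_mem_hermiteSpan j hf, (integral_norm_sq_pderiv1_le j hf).trans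
    (two_mul_add_one_mul_le hM (by positivity))⟩

lemma hermiteBounded_pderivMulti {n : ℕ} (M : ℕ) (β : Fin n → ℕ) :
    HermiteBounded M (∑ j, β j) (pderivMulti β) := by
  rw [Fin.sum_univ_def]
  exact .foldr (fun j => (hermiteBounded_pderiv1 M j).iterate (β j)) (List.finRange n)

lemma one_le_jap {n : ℕ} (x : En n) : 1 ≤ jap n x := by
  rw [jap, Real.one_le_sqrt, le_add_iff_nonneg_right]
  positivity

lemma jap_sq {n : ℕ} (x : En n) : jap n x ^ 2 = 1 + ∑ j, x j ^ 2 := by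
  rw [jap, Real.sq_sqrt (by positivity), EuclideanSpace.real_norm_sq_eq]

lemma jap_pow_succ_mul_norm_sq {n : ℕ} (k : ℕ) (f : En n → ℂ) (x : En n) :
    jap n x ^ (2 * (k + 1)) * ‖f x‖ ^ 2 =
      jap n x ^ (2 * k) * ‖f x‖ ^ 2 + ∑ j, jap n x ^ (2 * k) * ‖(x j : ℂ) * f x‖ ^ 2 := by
  simp_rw [norm_mul, mul_pow, Complex.norm_real, Real.norm_eq_abs, sq_abs, ← Finset.mul_sum,
    ← Finset.sum_mul]
  rw [mul_add, pow_add, mul_one, jap_sq]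
  ring

lemma integrable_jap_pow_mul_norm_sq {n : ℕ} (k : ℕ) {N : ℕ} {f : En n → ℂ}
    (hf : f ∈ hermiteSpan n N) : Integrable fun x => jap n x ^ (2 * k) * ‖f x‖ ^ 2 := by
  induction k generalizing N f with
  | zero => simpa using (memLp_two_of_mem_hermiteSpan hf).integrable_norm_pow two_ne_zero
  | succ k ih =>
    simp_rw [jap_pow_succ_mul_norm_sq]
    exact (ih hf).add (integrable_finsetSum _ fun j _ => ih (coord_mul_mem_hermiteSpan j hf))

lemma integral_jap_pow_mul_norm_sq_le {n : ℕ} (k : ℕ) {M N : ℕ} {f : En n → ℂ}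
    (hf : f ∈ hermiteSpan n N) (hM : N + k ≤ M) :
    ∫ x, jap n x ^ (2 * k) * ‖f x‖ ^ 2 ≤ ((n + 1) * (2 * M)) ^ k * ∫ x, ‖f x‖ ^ 2 := by
  induction k generalizing N f with
  | zero => simp
  | succ k ih =>
    set A : ℝ := ((n + 1) * (2 * M)) ^ k
    set I := ∫ x, ‖f x‖ ^ 2
    have coord_mem (j : Fin n) := coord_mul_mem_hermiteSpan j hf
    have coord_le (j : Fin n) :
        ∫ x, jap n x ^ (2 * k) * ‖(x j : ℂ) * f x‖ ^ 2 ≤ A * (2 * M * I) := by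
      refine (ih (coord_mem j) (by lia)).trans ?_
      gcongr
      simpa using (hermiteBounded_coord_mul M j (by lia) hf).2
    have one_le : (1 : ℝ) ≤ 2 * M := by exact_mod_cast (by lia : 1 ≤ 2 * M)
    simp_rw [jap_pow_succ_mul_norm_sq]
    rw [integral_add (integrable_jap_pow_mul_norm_sq k hf)
        (integrable_finsetSum _ fun j _ => integrable_jap_pow_mul_norm_sq k (coord_mem j)),
      integral_finsetSum _ fun j _ => integrable_jap_pow_mul_norm_sq k (coord_mem j)]
    calc _ ≤ A * I + ∑ _j : Fin n, A * (2 * M * I) :=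
          add_le_add (ih hf (by lia)) (Finset.sum_le_sum fun j _ => coord_le j)
      _ ≤ A * (2 * M * I) + ∑ _j : Fin n, A * (2 * M * I) := by
          gcongr
          exact le_mul_of_one_le_left (by positivity) one_le
      _ = ((n + 1) * (2 * M)) ^ (k + 1) * I := by
          rw [Finset.sum_const, Finset.card_fin, nsmul_eq_mul, pow_succ]
          ring

lemma integral_norm_sq_jap_rpow_mul_pderivMulti_le {n : ℕ} {r : ℝ} {k : ℕ} (hk : r ≤ k)
    (β : Fin n → ℕ) {N : ℕ} {f : En n → ℂ} (hf : f ∈ hermiteSpan n N) :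
    ∫ x, ‖((jap n x ^ r : ℝ) : ℂ) * pderivMulti β f x‖ ^ 2 ≤
      (n + 1) ^ k * (2 * (N + (∑ j, β j + k) : ℕ)) ^ (∑ j, β j + k) * ∫ x, ‖f x‖ ^ 2 := by
  set M := N + (∑ j, β j + k)
  obtain ⟨deriv_mem, deriv_le⟩ := hermiteBounded_pderivMulti M β (by lia) hf
  have weight_le (x : En n) : ‖((jap n x ^ r : ℝ) : ℂ) * pderivMulti β f x‖ ^ 2 ≤
      jap n x ^ (2 * k) * ‖pderivMulti β f x‖ ^ 2 := by
    have jap_pos : 0 < jap n x := one_pos.trans_le (one_le_jap x)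
    rw [norm_mul, mul_pow, Complex.norm_real, Real.norm_eq_abs, sq_abs, mul_comm 2 k, pow_mul]
    gcongr
    rw [← Real.rpow_natCast]
    exact Real.rpow_le_rpow_of_exponent_le (one_le_jap x) hk
  calc ∫ x, ‖((jap n x ^ r : ℝ) : ℂ) * pderivMulti β f x‖ ^ 2
    _ ≤ ∫ x, jap n x ^ (2 * k) * ‖pderivMulti β f x‖ ^ 2 :=
        integral_mono_of_nonneg (.of_forall fun x => by positivity)
          (integrable_jap_pow_mul_norm_sq k deriv_mem) (.of_forall weight_le)
    _ ≤ ((n + 1) * (2 * M)) ^ k * ∫ x, ‖pderivMulti β f x‖ ^ 2 :=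
        integral_jap_pow_mul_norm_sq_le k deriv_mem (by lia)
    _ ≤ ((n + 1) * (2 * M)) ^ k * ((2 * M) ^ (∑ j, β j) * ∫ x, ‖f x‖ ^ 2) := by gcongr
    _ = _ := by
        rw [mul_pow, pow_add]
        ring

lemma L2norm_jap_rpow_mul_pderivMulti_le {n : ℕ} {r : ℝ} {k : ℕ} (hk : r ≤ k)
    (β : Fin n → ℕ) {N : ℕ} {f : En n → ℂ} (hf : f ∈ hermiteSpan n N) :
    L2norm n (fun x => ((jap n x ^ r : ℝ) : ℂ) * pderivMulti β f x) ≤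
      √(n + 1) ^ k * (√2 * √(N + (∑ j, β j + k : ℕ))) ^ (∑ j, β j + k) * L2norm n f := by
  have constant_sq : (n + 1) ^ k * (2 * (N + (∑ j, β j + k) : ℕ)) ^ (∑ j, β j + k) =
      (√(n + 1) ^ k * (√2 * √(N + (∑ j, β j + k : ℕ))) ^ (∑ j, β j + k)) ^ 2 := by
    rw [mul_pow (√(n + 1) ^ k), pow_right_comm, pow_right_comm _ _ 2, mul_pow √2,
      Real.sq_sqrt (by positivity), Real.sq_sqrt (by positivity), Real.sq_sqrt (by positivity),
      Nat.cast_add N]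
  have energy := integral_norm_sq_jap_rpow_mul_pderivMulti_le hk β hf
  rw [constant_sq] at energy
  refine (Real.sqrt_le_sqrt energy).trans_eq ?_
  rw [Real.sqrt_mul (by positivity), Real.sqrt_sq (by positivity), L2norm]

/-! ### Scalar estimates -/

lemma rpow_le_Gamma_mul_exp {p t : ℝ} (hp : 0 ≤ p) (ht : 0 ≤ t) :
    t ^ p ≤ Real.Gamma (p + 1) * Real.exp t := by
  rw [← div_le_iff₀ (Real.exp_pos t), div_eq_mul_inv, ← Real.exp_neg,
    Real.Gamma_eq_integral (by positivity)]
  have integrable := Real.GammaIntegral_convergent (s := p + 1) (by positivity)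
  calc t ^ p * Real.exp (-t) = ∫ x in Set.Ioi t, t ^ p * Real.exp (-x) := by
        rw [integral_const_mul, integral_exp_neg_Ioi]
    _ ≤ ∫ x in Set.Ioi t, Real.exp (-x) * x ^ (p + 1 - 1) := by
        refine setIntegral_mono_on ((integrableOn_exp_neg_Ioi t).const_mul _)
          (integrable.mono_set (Set.Ioi_subset_Ioi ht)) measurableSet_Ioi fun x hx => ?_
        have le_x : t ≤ x := le_of_lt hx
        rw [add_sub_cancel_right, mul_comm]
        gcongr
    _ ≤ ∫ x in Set.Ioi 0, Real.exp (-x) * x ^ (p + 1 - 1) := by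
        refine setIntegral_mono_set integrable ?_ (Set.Ioi_subset_Ioi ht).eventuallyLE
        filter_upwards [ae_restrict_mem measurableSet_Ioi] with x (hx : 0 < x)
        positivity

lemma sqrt_pow_le_pow_mul_Gamma_mul_exp {ρ δ A : ℝ} (hρ : 0 < ρ) (hδ : 0 < δ) (hA : 0 ≤ A)
    (m : ℕ) :
    √A ^ m ≤ δ ^ m * Real.Gamma (m / ρ + 1) * Real.exp (A ^ (ρ / 2) / δ ^ ρ) := by
  have scaled : (A ^ (ρ / 2) / δ ^ ρ) ^ (m / ρ) = √A ^ m / δ ^ m := by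
    rw [Real.rpow_div_two_eq_sqrt _ hA, Real.div_rpow (by positivity) (by positivity),
      ← Real.rpow_mul (by positivity), ← Real.rpow_mul hδ.le, mul_div_cancel₀ _ hρ.ne',
      Real.rpow_natCast, Real.rpow_natCast]
  rw [mul_assoc, ← div_le_iff₀' (by positivity), ← scaled]
  exact rpow_le_Gamma_mul_exp (by positivity) (by positivity)

lemma exists_rpow_div_le_add {s D : ℝ} (hs : 0 < s) (hs1 : s < 1) (hD : 0 < D) :
    ∃ C, 0 ≤ C ∧ ∀ t, 0 ≤ t → t ^ s / D ≤ t + C := by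
  obtain ⟨T, hT, hTD⟩ : ∃ T : ℝ, 0 < T ∧ T ^ (1 - s) = D⁻¹ :=
    ⟨D⁻¹ ^ (1 - s)⁻¹, by positivity, Real.rpow_inv_rpow (by positivity) (sub_pos.2 hs1).ne'⟩
  refine ⟨T ^ s / D, by positivity, fun t ht => ?_⟩
  rcases le_total t T with small | large
  · exact le_add_of_nonneg_of_le ht (by gcongr)
  · refine le_add_of_le_of_nonneg ?_ (by positivity)
    calc t ^ s / D = t ^ s * T ^ (1 - s) := by rw [hTD, div_eq_mul_inv]
      _ ≤ t ^ s * t ^ (1 - s) := by gcongr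
      _ = t := by rw [← Real.rpow_add (hT.trans_le large), add_sub_cancel, Real.rpow_one]

lemma exists_sqrt_add_pow_le {ρ δ : ℝ} (hρ : 0 < ρ) (hρ2 : ρ < 2) (hδ : 0 < δ) :
    ∃ C, 1 ≤ C ∧ ∀ (A : ℝ) (m : ℕ), 0 ≤ A → √(A + m) ^ m ≤
      C * Real.exp 1 ^ m * δ ^ m * Real.Gamma (m / ρ + 1) * Real.exp (A ^ (ρ / 2) / δ ^ ρ) := by
  obtain ⟨C, hC, sublinear⟩ := exists_rpow_div_le_add (s := ρ / 2) (D := δ ^ ρ)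
    (by positivity) (by linarith) (by positivity)
  refine ⟨Real.exp C, Real.one_le_exp hC, fun A m hA => ?_⟩
  have exponent_le : (A + m) ^ (ρ / 2) / δ ^ ρ ≤ A ^ (ρ / 2) / δ ^ ρ + (m + C) := by
    calc (A + m) ^ (ρ / 2) / δ ^ ρ ≤ (A ^ (ρ / 2) + (m : ℝ) ^ (ρ / 2)) / δ ^ ρ := by
          gcongr
          exact Real.rpow_add_le_add_rpow hA m.cast_nonneg (by positivity) (by linarith)
      _ ≤ A ^ (ρ / 2) / δ ^ ρ + (m + C) := by
          rw [add_div]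
          gcongr
          exact sublinear m m.cast_nonneg
  calc √(A + m) ^ m
    _ ≤ δ ^ m * Real.Gamma (m / ρ + 1) * Real.exp ((A + m) ^ (ρ / 2) / δ ^ ρ) :=
        sqrt_pow_le_pow_mul_Gamma_mul_exp hρ hδ (by positivity) m
    _ ≤ δ ^ m * Real.Gamma (m / ρ + 1) * Real.exp (A ^ (ρ / 2) / δ ^ ρ + (m + C)) := by gcongr
    _ = _ := by
        rw [Real.exp_add, Real.exp_add, Real.exp_one_pow]
        ring

lemma Gamma_add_one_le_Gamma {p q : ℝ} (hp : 0 ≤ p) (hpq : p + 2 ≤ q) :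
    Real.Gamma (p + 1) ≤ Real.Gamma q := by
  have Gamma_pos : 0 < Real.Gamma (p + 1) := Real.Gamma_pos_of_pos (by positivity)
  calc Real.Gamma (p + 1) ≤ (p + 1) * Real.Gamma (p + 1) :=
        le_mul_of_one_le_left Gamma_pos.le (by linarith)
    _ = Real.Gamma (p + 2) := by
        rw [← Real.Gamma_add_one (by positivity)]
        ring_nf
    _ ≤ Real.Gamma q := Real.Gamma_strictMonoOn_Ici.monotoneOn
        (Set.mem_Ici.2 (by linarith)) (Set.mem_Ici.2 (by linarith)) hpq

lemma pow_le_mul_rpow {K t : ℝ} {m : ℕ} (hK : 1 ≤ K) (hm : m ≤ t + 1) : K ^ m ≤ K * K ^ t := by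
  calc K ^ m = K ^ (m : ℝ) := (Real.rpow_natCast K m).symm
    _ ≤ K ^ (t + 1) := Real.rpow_le_rpow_of_exponent_le hK hm
    _ = K * K ^ t := by rw [Real.rpow_add_one (by positivity), mul_comm]

lemma sqrt_pow_le_sqrt_mul_rpow {a r : ℝ} {k : ℕ} (ha : 1 ≤ a) (hk : k ≤ r + 1) :
    √a ^ k ≤ √a * a ^ (r / 2) := by
  rw [Real.rpow_div_two_eq_sqrt _ (by positivity)]
  exact pow_le_mul_rpow (Real.one_le_sqrt.2 ha) hk

lemma one_lt_sqrt_two_mul_exp_one : 1 < √2 * Real.exp 1 :=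
  one_lt_mul_of_lt_of_le (by simp [Real.lt_sqrt]) (by simp)

lemma exists_sqrt_two_mul_sqrt_add_pow_le {ρ δ : ℝ} (hρ : 1 ≤ ρ) (hρ2 : ρ < 2) (hδ : 0 < δ)
    (hδ1 : δ ≤ 1) :
    ∃ C, 1 < C ∧ ∀ {A r : ℝ} {b k : ℕ}, 0 ≤ A → k ≤ r + 1 →
      (√2 * √(A + (b + k : ℕ))) ^ (b + k) ≤
        C * (√2 * Real.exp 1) ^ (b + r) * δ ^ b * Real.Gamma ((r + b) / ρ + 3) *
          Real.exp (A ^ (ρ / 2) / δ ^ ρ) := by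
  set K := √2 * Real.exp 1
  obtain ⟨C, hC, sqrt_add_pow_le⟩ := exists_sqrt_add_pow_le (one_pos.trans_le hρ) hρ2 hδ
  refine ⟨C * K, one_lt_mul_of_le_of_lt hC one_lt_sqrt_two_mul_exp_one,
    fun {A r b k} hA hk => ?_⟩
  have m_le : ((b + k : ℕ) : ℝ) ≤ b + r + 1 := by
    push_cast
    linarith
  have K_pow_le := pow_le_mul_rpow one_lt_sqrt_two_mul_exp_one.le m_le
  have δ_pow_le : δ ^ (b + k) ≤ δ ^ b := pow_le_pow_of_le_one hδ.le hδ1 (b.le_add_right k)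
  have Gamma_le : Real.Gamma ((b + k : ℕ) / ρ + 1) ≤ Real.Gamma ((r + b) / ρ + 3) := by
    refine Gamma_add_one_le_Gamma (by positivity) ?_
    have div_le : ((b + k : ℕ) : ℝ) / ρ ≤ (r + b) / ρ + 1 := by
      rw [div_add_one (by positivity)]
      gcongr
      linarith
    linarith
  calc (√2 * √(A + (b + k : ℕ))) ^ (b + k)
    _ ≤ √2 ^ (b + k) * (C * Real.exp 1 ^ (b + k) * δ ^ (b + k) *
          Real.Gamma ((b + k : ℕ) / ρ + 1) * Real.exp (A ^ (ρ / 2) / δ ^ ρ)) := by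
        rw [mul_pow]
        gcongr
        exact sqrt_add_pow_le A (b + k) hA
    _ = C * K ^ (b + k) * δ ^ (b + k) * Real.Gamma ((b + k : ℕ) / ρ + 1) *
          Real.exp (A ^ (ρ / 2) / δ ^ ρ) := by
        rw [mul_pow]
        ring
    _ ≤ C * (K * K ^ (b + r)) * δ ^ b * Real.Gamma ((r + b) / ρ + 3) *
          Real.exp (A ^ (ρ / 2) / δ ^ ρ) := by gcongr
    _ = _ := by ring

/-- **Bernstein type estimates (Proposition "prop1", second estimate)**. -/
theorem bernstein_estimate_weight (n : ℕ) (ε : ℝ) (hε : 0 < ε) (hε1 : ε ≤ 1) :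
    ∃ K : ℝ, 1 < K ∧ ∀ δ : ℝ, 0 < δ → δ ≤ 1 → ∃ Kt : ℝ, 1 < Kt ∧
      ∀ (r : ℝ), 0 < r → ∀ (β : Fin n → ℕ) (N : ℕ), ∀ f ∈ hermiteSpan n N,
        L2norm n (fun x => ((jap n x ^ r : ℝ) : ℂ) * pderivMulti β f x) ≤
          Kt * K ^ ((((∑ j, β j) : ℕ) : ℝ) + r) * δ ^ ((∑ j, β j)) *
            ((n : ℝ) + 1) ^ (r / 2) *
            Real.Gamma ((r + (((∑ j, β j) : ℕ) : ℝ)) / (2 - ε) + 3) *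
            Real.exp ((N : ℝ) ^ (1 - ε / 2) / δ ^ (2 - ε)) * L2norm n f := by
  refine ⟨√2 * Real.exp 1, one_lt_sqrt_two_mul_exp_one, fun δ hδ hδ1 => ?_⟩
  obtain ⟨C, hC, scalar_le⟩ := exists_sqrt_two_mul_sqrt_add_pow_le
    (ρ := 2 - ε) (by linarith) (by linarith) hδ hδ1
  refine ⟨√((n : ℝ) + 1) * C, one_lt_mul_of_le_of_lt (Real.one_le_sqrt.2 (by simp)) hC,
    fun r hr β N f hf => ?_⟩
  have ceil_le : (⌈r⌉₊ : ℝ) ≤ r + 1 := (Nat.ceil_lt_add_one hr.le).le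
  have weight_le := sqrt_pow_le_sqrt_mul_rpow (a := n + 1) (by simp) ceil_le
  have degree_le := scalar_le (b := ∑ j, β j) N.cast_nonneg ceil_le
  rw [show 1 - ε / 2 = (2 - ε) / 2 by ring]
  calc L2norm n (fun x => ((jap n x ^ r : ℝ) : ℂ) * pderivMulti β f x)
    _ ≤ √(n + 1) ^ ⌈r⌉₊ * (√2 * √(N + (∑ j, β j + ⌈r⌉₊ : ℕ))) ^ (∑ j, β j + ⌈r⌉₊) *
          L2norm n f := L2norm_jap_rpow_mul_pderivMulti_le (Nat.le_ceil r) β hf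
    _ ≤ _ := mul_le_mul_of_nonneg_right (mul_le_mul weight_le degree_le (by positivity)
          (by positivity)) (Real.sqrt_nonneg _)
    _ = _ := by ring

end
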